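/- Let lb < hb be real numbers, let d₂, N be positive natural numbers, let n be a natural number with n ≥ N, and set d₃ = d₂·(n + 1) + 1. Then there exists a function h : ℝ^{d₂} × ℝ → ℝ^{d₃} (an 'embedding network' taking a participant vector and its attention weight) with the following property: for any two finite indexed families of vectors x¹, …, x^{M₁} and z¹, …, z^{M₂} in [lb, hb]^{d₂} with 1 ≤ M₁, M₂ ≤ N, and any strictly positive weights w₁, …, w_{M₁} and v₁, …, v_{M₂} each summing to 1, if the weighted encodings agree, i.e. ∑_{j=1}^{M₁} w_j · h(xʲ, w_j) = ∑_{j=1}^{M₂} v_j · h(zʲ, v_j), then M₁ = M₂ and for every coordinate index i the multiset of i-th coordinates {x¹_i, …, x^{M₁}_i} equals the multiset {z¹_i, …, z^{M₂}_i}. One valid choice is h(x, ω) = (1/ω)·[((x_1−lb)/(hb−lb))^0, …, ((x_1−lb)/(hb−lb))^n, …, ((x_{d₂}−lb)/(hb−lb))^0, …, ((x_{d₂}−lb)/(hb−lb))^n, 1]ᵀ, for which ∑_j w_j·h(xʲ, w_j) equals the vector of all normalized per-coordinate power sums of degrees 0,…,n together with the cardinality M₁. -/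

import Mathlib

/-!
Dividing each feature vector by its own attention weight cancels that weight in the encoding, which
becomes a plain sum. Its entries are the power sums of degrees `0, …, n` of every normalized
coordinate. By Newton's identities the power sums of degree at most `n` determine, in characteristic
zero, the elementary symmetric functions of degree at most `n`. For a multiset of at most `n`
elements these are, up to sign, the coefficients of the monic polynomial whose roots they are.
-/

section PowerSums

variable {R : Type*} [CommRing R]

theorem natCast_mul_multiset_esymm_eq_sum (s : Multiset R) (k : ℕ) :
    k * s.esymm k = (-1) ^ (k + 1) *
      ∑ a ∈ Finset.HasAntidiagonal.antidiagonal k with a.1 < k,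
        (-1) ^ a.1 * s.esymm a.1 * (s.map (· ^ a.2)).sum := by
  classical
  have aeval_psum (m : ℕ) : MvPolynomial.aeval (fun a : s ↦ (a : R)) (MvPolynomial.psum s R m) =
      (s.map (· ^ m)).sum := by
    rw [← Multiset.map_univ_comp_coe s (· ^ m), MvPolynomial.psum, map_sum]
    simp only [map_pow, MvPolynomial.aeval_X, Finset.sum_eq_multiset_sum, Function.comp_def]
  simpa only [map_mul, map_natCast, map_pow, map_neg, map_one, map_sum, aeval_psum,
    MvPolynomial.aeval_esymm_eq_multiset_esymm, Multiset.map_univ_coe] using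
    congrArg (MvPolynomial.aeval fun a : s ↦ (a : R)) (MvPolynomial.mul_esymm_eq_sum s R k)

variable [IsDomain R] {s t : Multiset R}

theorem multiset_eq_of_card_eq_of_esymm_eq (hcard : s.card = t.card)
    (h : ∀ k ≤ s.card, s.esymm k = t.esymm k) : s = t := by
  rw [← Polynomial.roots_multiset_prod_X_sub_C s, ← Polynomial.roots_multiset_prod_X_sub_C t,
    Multiset.prod_X_sub_X_eq_sum_esymm, Multiset.prod_X_sub_X_eq_sum_esymm, ← hcard]
  congr 1
  refine Finset.sum_congr rfl fun k hk ↦ ?_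
  rw [h k (Finset.mem_range_succ_iff.1 hk)]

variable [CharZero R] {n : ℕ}

theorem multiset_esymm_eq_of_sum_pow_eq
    (h : ∀ k, 1 ≤ k → k ≤ n → (s.map (· ^ k)).sum = (t.map (· ^ k)).sum) :
    ∀ k ≤ n, s.esymm k = t.esymm k := by
  intro k
  induction k using Nat.strong_induction_on with
  | _ k ih =>
    intro hkn
    obtain rfl | hk := eq_or_ne k 0
    · simp [Multiset.esymm]
    refine mul_left_cancel₀ (Nat.cast_ne_zero.2 hk : (k : R) ≠ 0) ?_
    rw [natCast_mul_multiset_esymm_eq_sum, natCast_mul_multiset_esymm_eq_sum]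
    congr 1
    refine Finset.sum_congr rfl fun a ha ↦ ?_
    obtain ⟨hadd, hlt⟩ : a.1 + a.2 = k ∧ a.1 < k := by simpa using ha
    rw [ih a.1 hlt (by omega), h a.2 (by omega) (by omega)]

theorem multiset_eq_of_sum_pow_eq (hs : s.card ≤ n)
    (h : ∀ k ≤ n, (s.map (· ^ k)).sum = (t.map (· ^ k)).sum) : s = t := by
  have hcard : s.card = t.card := by simpa using h 0 n.zero_le
  exact multiset_eq_of_card_eq_of_esymm_eq hcard fun k hk ↦
    multiset_esymm_eq_of_sum_pow_eq (fun j _ ↦ h j) k (hk.trans hs)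

end PowerSums

section PowerFeatures

variable {R : Type*} {d n : ℕ}

/-- The powers of degrees `0, …, n` of all coordinates of `x`, listed coordinate by coordinate and
followed by a final entry `1`, which records the cardinality once feature vectors are summed. -/
def powerFeatures [Semiring R] (n : ℕ) (x : Fin d → R) : Fin (d * (n + 1) + 1) → R :=
  Fin.snoc (α := fun _ ↦ R) (fun q ↦ x q.divNat ^ (q.modNat : ℕ)) 1

theorem powerFeatures_last [Semiring R] (x : Fin d → R) :
    powerFeatures n x (Fin.last _) = 1 :=
  Fin.snoc_last (α := fun _ ↦ R) _ _

theorem powerFeatures_castSucc [Semiring R] (x : Fin d → R) (i : Fin d) (k : Fin (n + 1)) :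
    powerFeatures n x (finProdFinEquiv (i, k)).castSucc = x i ^ (k : ℕ) := by
  have hik : ((finProdFinEquiv (i, k)).divNat, (finProdFinEquiv (i, k)).modNat) = (i, k) :=
    finProdFinEquiv.symm_apply_apply (i, k)
  obtain ⟨hi, hk⟩ := Prod.mk.inj hik
  rw [powerFeatures, Fin.snoc_castSucc, hi, hk]

variable {ι κ : Type*} [Fintype ι] [Fintype κ] {x : ι → Fin d → R} {z : κ → Fin d → R}

theorem card_eq_of_sum_powerFeatures_eq [Semiring R] [CharZero R]
    (h : ∑ j, powerFeatures n (x j) = ∑ j, powerFeatures n (z j)) :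
    Fintype.card ι = Fintype.card κ := by
  simpa [powerFeatures_last] using congrFun h (Fin.last _)

theorem sum_pow_eq_of_sum_powerFeatures_eq [Semiring R]
    (h : ∑ j, powerFeatures n (x j) = ∑ j, powerFeatures n (z j)) (i : Fin d) {k : ℕ}
    (hk : k ≤ n) : ∑ j, x j i ^ k = ∑ j, z j i ^ k := by
  simpa only [Finset.sum_apply, powerFeatures_castSucc] using
    congrFun h (finProdFinEquiv (i, ⟨k, Nat.lt_succ_of_le hk⟩)).castSucc

theorem map_eq_map_of_sum_powerFeatures_eq [CommRing R] [IsDomain R] [CharZero R]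
    (hι : Fintype.card ι ≤ n)
    (h : ∑ j, powerFeatures n (x j) = ∑ j, powerFeatures n (z j)) (i : Fin d) :
    Multiset.map (fun j ↦ x j i) Finset.univ.val =
      Multiset.map (fun j ↦ z j i) Finset.univ.val := by
  refine multiset_eq_of_sum_pow_eq (by simpa using hι) fun k hk ↦ ?_
  simpa only [Multiset.map_map, Function.comp_def, Finset.sum_eq_multiset_sum] using
    sum_pow_eq_of_sum_powerFeatures_eq h i hk

end PowerFeatures

section Embedding

variable {K : Type*} [Field K] {lb hb : K} {d n : ℕ}

/-- The affine normalization of a coordinate that sends `lb` to `0` and `hb` to `1`. -/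
def rescale (lb hb t : K) : K :=
  (t - lb) / (hb - lb)

theorem rescale_injective (hne : lb ≠ hb) : Function.Injective (rescale lb hb) :=
  fun _ _ h ↦ sub_left_injective ((div_left_inj' (sub_ne_zero.2 hne.symm)).1 h)

/-- The embedding network: the power features of the rescaled participant vector `p.1`, divided by
its attention weight `p.2`. -/
def powerEmbedding (lb hb : K) (n : ℕ) (p : (Fin d → K) × K) : Fin (d * (n + 1) + 1) → K :=
  p.2⁻¹ • powerFeatures n (rescale lb hb ∘ p.1)

variable {ι κ : Type*} [Fintype ι] [Fintype κ]

theorem sum_smul_powerEmbedding (x : ι → Fin d → K) {w : ι → K} (hw : ∀ j, w j ≠ 0) :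
    ∑ j, w j • powerEmbedding lb hb n (x j, w j) =
      ∑ j, powerFeatures n (rescale lb hb ∘ x j) :=
  Finset.sum_congr rfl fun j _ ↦ smul_inv_smul₀ (hw j) _

theorem attention_based_encoding_injective_general [CharZero K] (hne : lb ≠ hb)
    (hι : Fintype.card ι ≤ n) {x : ι → Fin d → K} {z : κ → Fin d → K} {w : ι → K} {v : κ → K}
    (hw : ∀ j, w j ≠ 0) (hv : ∀ j, v j ≠ 0)
    (h : ∑ j, w j • powerEmbedding lb hb n (x j, w j) =
      ∑ j, v j • powerEmbedding lb hb n (z j, v j)) :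
    Fintype.card ι = Fintype.card κ ∧
      ∀ i : Fin d,
        Multiset.map (fun j ↦ x j i) Finset.univ.val =
          Multiset.map (fun j ↦ z j i) Finset.univ.val := by
  rw [sum_smul_powerEmbedding x hw, sum_smul_powerEmbedding z hv] at h
  refine ⟨card_eq_of_sum_powerFeatures_eq h, fun i ↦ ?_⟩
  apply Multiset.map_injective (rescale_injective hne)
  simpa only [Multiset.map_map, Function.comp_def] using map_eq_map_of_sum_powerFeatures_eq hι h i

end Embedding

/-- Theorem 1: there exists an embedding network `h` (taking a participant
vector and its attention weight) with values in ℝ^{d₂·(n+1)+1} such that the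
attention-weighted encoding `∑_j w_j • h(xʲ, w_j)` is injective on families of
vectors in [lb, hb]^{d₂} of cardinality between 1 and N with positive weights
summing to 1, up to feature swaps (equality of all per-coordinate multisets). -/
theorem attention_based_encoding_injective
    (lb hb : ℝ) (hlt : lb < hb) (d₂ N : ℕ) (hd : 0 < d₂) (hN : 0 < N)
    (n : ℕ) (hn : N ≤ n) :
    ∃ h : (Fin d₂ → ℝ) × ℝ → (Fin (d₂ * (n + 1) + 1) → ℝ),
      ∀ (M₁ M₂ : ℕ), 1 ≤ M₁ → M₁ ≤ N → 1 ≤ M₂ → M₂ ≤ N →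
      ∀ (x : Fin M₁ → Fin d₂ → ℝ) (z : Fin M₂ → Fin d₂ → ℝ),
      (∀ j i, lb ≤ x j i ∧ x j i ≤ hb) →
      (∀ j i, lb ≤ z j i ∧ z j i ≤ hb) →
      ∀ (w : Fin M₁ → ℝ) (v : Fin M₂ → ℝ),
      (∀ j, 0 < w j) → (∀ j, 0 < v j) →
      (∑ j, w j) = 1 → (∑ j, v j) = 1 →
      (∑ j, w j • h (x j, w j)) = (∑ j, v j • h (z j, v j)) →
      M₁ = M₂ ∧
        ∀ i : Fin d₂,
          Multiset.map (fun j => x j i) Finset.univ.val =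
          Multiset.map (fun j => z j i) Finset.univ.val := by
  refine ⟨powerEmbedding lb hb n, fun M₁ M₂ _ hM₁ _ _ x z _ _ w v hw hv _ _ h ↦ ?_⟩
  simpa only [Fintype.card_fin] using attention_based_encoding_injective_general hlt.ne
    (by simpa using hM₁.trans hn) (fun j ↦ (hw j).ne') (fun j ↦ (hv j).ne') h
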